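/- arXiv:1612.05594 — 2 statements merged into one kernel-verified Lean document; each statement's English description precedes it below -/
import Mathlib

section
/- Let f : ℝⁿ → ℝⁿ be continuously differentiable, let M be a symmetric positive definite real n×n matrix, and let β > 0. Assume that for every z ∈ ℝⁿ the Loewner inequality (Df(z))ᵀ M + M (Df(z)) ≼ −2βM holds, where Df(z) is the Jacobian (Fréchet derivative) of f at z. If x, y : [0,∞) → ℝⁿ are differentiable and satisfy x′(t) = f(x(t)) and y′(t) = f(y(t)) for all t ≥ 0, then for all t ≥ 0, ‖x(t) − y(t)‖_M ≤ e^{−βt} ‖x(0) − y(0)‖_M. In particular every trajectory converges globally exponentially to the given trajectory. -/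
/-!
Put `V = vᵀ M v` for the difference `v = x - y` of two trajectories, so that
`V' = 2 vᵀ M (f x - f y)`. Along the segment from `y` to `x`, the mean value theorem applied to
the scalar function `z ↦ vᵀ M f z` turns the Jacobian inequality into
`vᵀ M (f x - f y) ≤ -β vᵀ M v`. Hence `V' ≤ -2β V`, and Grönwall's inequality gives
`V t ≤ exp (-2βt) V 0`, whose square root is the claim.
-/

open Matrix

/-- The M-norm of a vector: `‖v‖_M = √(vᵀ M v)`. -/
noncomputable def mnorm {n : ℕ} (M : Matrix (Fin n) (Fin n) ℝ) (v : Fin n → ℝ) : ℝ :=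
  Real.sqrt (v ⬝ᵥ M.mulVec v)

/-- The Jacobian of `f` at `z`, as a matrix. -/
noncomputable def jac {n : ℕ} (f : (Fin n → ℝ) → (Fin n → ℝ)) (z : Fin n → ℝ) :
    Matrix (Fin n) (Fin n) ℝ :=
  LinearMap.toMatrix' (fderiv ℝ f z : (Fin n → ℝ) →ₗ[ℝ] (Fin n → ℝ))

/-- Loewner order: `A ≼ B` iff `B - A` is positive semidefinite. -/
def loewnerLE {n : ℕ} (A B : Matrix (Fin n) (Fin n) ℝ) : Prop := (B - A).PosSemidef

section BilinearForm

variable {E : Type*} [NormedAddCommGroup E] [NormedSpace ℝ E]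
  {B : E →L[ℝ] E →L[ℝ] ℝ} {f : E → E} {C : Set E} {μ : ℝ}

/-- The one-sided Lipschitz condition on a set `C` with respect to a bilinear form `B`: the
infinitesimal contraction condition integrated along segments. The constant `μ` may have either
sign; contraction at rate `β` is the case `μ = -β < 0`. -/
def OneSidedLipschitzOn (B : E →L[ℝ] E →L[ℝ] ℝ) (μ : ℝ) (f : E → E) (C : Set E) : Prop :=
  ∀ a ∈ C, ∀ b ∈ C, B (a - b) (f a - f b) ≤ μ * B (a - b) (a - b)

theorem oneSidedLipschitzOn_of_hasFDerivWithinAt_le {f' : E → E →L[ℝ] E}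
    (hC : Convex ℝ C) (hf : ∀ z ∈ C, HasFDerivWithinAt f (f' z) C z)
    (hle : ∀ z ∈ C, ∀ w, B w (f' z w) ≤ μ * B w w) :
    OneSidedLipschitzOn B μ f C := by
  intro a ha b hb
  have hBf : ∀ z ∈ C,
      HasFDerivWithinAt (fun z => B (a - b) (f z)) ((B (a - b)).comp (f' z)) C z :=
    fun z hz => (B (a - b)).hasFDerivAt.comp_hasFDerivWithinAt z (hf z hz)
  obtain ⟨c, hc, hmean⟩ := domain_mvt hBf hC hb ha
  calc B (a - b) (f a - f b) = B (a - b) (f' c (a - b)) := by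
        rw [map_sub]
        exact hmean
    _ ≤ μ * B (a - b) (a - b) := hle c (hC.segment_subset hb ha hc) (a - b)

theorem hasDerivWithinAt_apply_self (hB : ∀ u v, B u v = B v u) {u : ℝ → E} {u' : E}
    {s : Set ℝ} {t : ℝ} (hu : HasDerivWithinAt u u' s t) :
    HasDerivWithinAt (fun r => B (u r) (u r)) (2 * B (u t) u') s t :=
  (B.hasDerivWithinAt_of_bilinear hu hu).congr_deriv (by rw [hB u' (u t), two_mul])

theorem le_mul_exp_of_hasDerivWithinAt_le {V V' : ℝ → ℝ} {K a t : ℝ}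
    (hV : ∀ s ∈ Set.Ici a, HasDerivWithinAt V (V' s) (Set.Ici a) s)
    (hle : ∀ s ∈ Set.Ici a, V' s ≤ K * V s) (ht : a ≤ t) :
    V t ≤ V a * Real.exp (K * (t - a)) := by
  have hcont : ContinuousOn V (Set.Icc a t) := fun s hs =>
    (hV s hs.1).continuousWithinAt.mono Set.Icc_subset_Ici_self
  have hright : ∀ s ∈ Set.Ico a t, HasDerivWithinAt V (V' s) (Set.Ici s) s := fun s hs =>
    (hV s hs.1).mono (Set.Ici_subset_Ici.2 hs.1)
  rw [← gronwallBound_ε0]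
  exact le_gronwallBound_of_liminf_deriv_right_le hcont
    (fun s hs _ hr => (hright s hs).liminf_right_slope_le hr) le_rfl
    (fun s hs => by simpa only [add_zero] using hle s hs.1) t (Set.right_mem_Icc.2 ht)

theorem OneSidedLipschitzOn.apply_sub_le (hf : OneSidedLipschitzOn B μ f C)
    (hB : ∀ u v, B u v = B v u) {x y : ℝ → E} {a t : ℝ}
    (hxC : Set.MapsTo x (Set.Ici a) C) (hyC : Set.MapsTo y (Set.Ici a) C)
    (hx : ∀ s ∈ Set.Ici a, HasDerivWithinAt x (f (x s)) (Set.Ici a) s)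
    (hy : ∀ s ∈ Set.Ici a, HasDerivWithinAt y (f (y s)) (Set.Ici a) s) (ht : a ≤ t) :
    B (x t - y t) (x t - y t) ≤
      B (x a - y a) (x a - y a) * Real.exp (2 * μ * (t - a)) :=
  le_mul_exp_of_hasDerivWithinAt_le
    (fun s hs => hasDerivWithinAt_apply_self hB ((hx s hs).sub (hy s hs)))
    (fun s hs => by
      have hdiss := hf (x s) (hxC hs) (y s) (hyC hs)
      simp only [Pi.sub_apply]
      linarith)
    ht

end BilinearForm

section MatrixMetric

theorem dotProduct_mulVec_comm_of_isSymm {ι R : Type*} [Fintype ι] [CommSemiring R]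
    {M : Matrix ι ι R} (hM : M.IsSymm) (u v : ι → R) :
    u ⬝ᵥ M *ᵥ v = v ⬝ᵥ M *ᵥ u := by
  rw [← dotProduct_transpose_mulVec, hM.eq]

theorem dotProduct_transpose_mul_add_mul_mulVec {ι R : Type*} [Fintype ι] [CommSemiring R]
    {M : Matrix ι ι R} (hM : M.IsSymm) (A : Matrix ι ι R) (w : ι → R) :
    w ⬝ᵥ (Aᵀ * M + M * A) *ᵥ w = 2 * (w ⬝ᵥ M *ᵥ A *ᵥ w) := by
  have htranspose : w ⬝ᵥ Aᵀ *ᵥ M *ᵥ w = w ⬝ᵥ M *ᵥ A *ᵥ w := by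
    rw [dotProduct_transpose_mulVec, dotProduct_comm, dotProduct_mulVec_comm_of_isSymm hM]
  rw [add_mulVec, dotProduct_add, ← mulVec_mulVec, ← mulVec_mulVec, htranspose, two_mul]

/-- The bilinear form `(v, w) ↦ vᵀ M w` of a square matrix, bundled as a continuous bilinear map
so that the calculus of bilinear maps applies to it. -/
noncomputable def matrixBilin {ι : Type*} [Fintype ι] [DecidableEq ι] (M : Matrix ι ι ℝ) :
    (ι → ℝ) →L[ℝ] (ι → ℝ) →L[ℝ] ℝ :=
  (Matrix.toLinearMap₂' ℝ M).toContinuousBilinearMap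

theorem matrixBilin_apply {ι : Type*} [Fintype ι] [DecidableEq ι] (M : Matrix ι ι ℝ)
    (v w : ι → ℝ) : matrixBilin M v w = v ⬝ᵥ M *ᵥ w :=
  Matrix.toLinearMap₂'_apply' M v w

theorem matrixBilin_comm {ι : Type*} [Fintype ι] [DecidableEq ι] {M : Matrix ι ι ℝ}
    (hM : M.IsSymm) (v w : ι → ℝ) : matrixBilin M v w = matrixBilin M w v := by
  simpa only [matrixBilin_apply] using dotProduct_mulVec_comm_of_isSymm hM v w

variable {n : ℕ} {M : Matrix (Fin n) (Fin n) ℝ}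

theorem loewnerLE.dotProduct_mulVec_le {A B : Matrix (Fin n) (Fin n) ℝ} (h : loewnerLE A B)
    (w : Fin n → ℝ) : w ⬝ᵥ A *ᵥ w ≤ w ⬝ᵥ B *ᵥ w := by
  have hnonneg : 0 ≤ w ⬝ᵥ (B - A) *ᵥ w := h.dotProduct_mulVec_nonneg w
  rwa [sub_mulVec, dotProduct_sub, sub_nonneg] at hnonneg

theorem jac_mulVec (f : (Fin n → ℝ) → Fin n → ℝ) (z w : Fin n → ℝ) :
    jac f z *ᵥ w = fderiv ℝ f z w :=
  LinearMap.toMatrix'_mulVec _ w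

theorem dotProduct_mulVec_fderiv_le_of_loewnerLE {f : (Fin n → ℝ) → Fin n → ℝ} {β : ℝ}
    {z : Fin n → ℝ} (hM : M.IsSymm)
    (h : loewnerLE ((jac f z)ᵀ * M + M * jac f z) ((-(2 * β)) • M)) (w : Fin n → ℝ) :
    w ⬝ᵥ M *ᵥ fderiv ℝ f z w ≤ -β * (w ⬝ᵥ M *ᵥ w) := by
  have hquad := h.dotProduct_mulVec_le w
  rw [dotProduct_transpose_mul_add_mul_mulVec hM, jac_mulVec, smul_mulVec, dotProduct_smul,
    smul_eq_mul] at hquad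
  linarith

theorem mnorm_le_mul_mnorm {v w : Fin n → ℝ} {c : ℝ} (hc : 0 ≤ c)
    (h : v ⬝ᵥ M *ᵥ v ≤ c ^ 2 * (w ⬝ᵥ M *ᵥ w)) : mnorm M v ≤ c * mnorm M w :=
  calc mnorm M v ≤ √(c ^ 2 * (w ⬝ᵥ M *ᵥ w)) := Real.sqrt_le_sqrt h
    _ = c * mnorm M w := by rw [Real.sqrt_mul (sq_nonneg c), Real.sqrt_sq hc, mnorm]

end MatrixMetric

theorem stmt0_general {n : ℕ} {f : (Fin n → ℝ) → Fin n → ℝ} {C : Set (Fin n → ℝ)}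
    (hC : Convex ℝ C) (hf : ∀ z ∈ C, DifferentiableAt ℝ f z)
    {M : Matrix (Fin n) (Fin n) ℝ} (hM : M.PosSemidef) {β : ℝ}
    (hcontract : ∀ z ∈ C, loewnerLE ((jac f z)ᵀ * M + M * jac f z) ((-(2 * β)) • M))
    {x y : ℝ → Fin n → ℝ}
    (hxC : Set.MapsTo x (Set.Ici 0) C) (hyC : Set.MapsTo y (Set.Ici 0) C)
    (hx : ∀ t ∈ Set.Ici (0 : ℝ), HasDerivWithinAt x (f (x t)) (Set.Ici 0) t)
    (hy : ∀ t ∈ Set.Ici (0 : ℝ), HasDerivWithinAt y (f (y t)) (Set.Ici 0) t)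
    {t : ℝ} (ht : 0 ≤ t) :
    mnorm M (x t - y t) ≤ Real.exp (-β * t) * mnorm M (x 0 - y 0) := by
  have hMsymm : M.IsSymm := hM.isHermitian
  have hlip : OneSidedLipschitzOn (matrixBilin M) (-β) f C :=
    oneSidedLipschitzOn_of_hasFDerivWithinAt_le hC
      (fun z hz => (hf z hz).hasFDerivAt.hasFDerivWithinAt) fun z hz w => by
        simpa only [matrixBilin_apply] using
          dotProduct_mulVec_fderiv_le_of_loewnerLE hMsymm (hcontract z hz) w
  have hdecay := hlip.apply_sub_le (matrixBilin_comm hMsymm) hxC hyC hx hy ht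
  have hexp : Real.exp (2 * -β * (t - 0)) = Real.exp (-β * t) ^ 2 := by
    rw [← Real.exp_nat_mul]
    push_cast
    ring_nf
  apply mnorm_le_mul_mnorm (Real.exp_pos _).le
  rwa [hexp, mul_comm, matrixBilin_apply, matrixBilin_apply] at hdecay

theorem stmt0 {n : ℕ} (f : (Fin n → ℝ) → (Fin n → ℝ)) (hf : ContDiff ℝ 1 f)
    (M : Matrix (Fin n) (Fin n) ℝ) (hMsymm : M.IsSymm) (hMpd : M.PosDef)
    (β : ℝ) (hβ : 0 < β)
    (hcontract : ∀ z : Fin n → ℝ,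
      loewnerLE ((jac f z)ᵀ * M + M * jac f z) ((-(2 * β)) • M))
    (x y : ℝ → Fin n → ℝ)
    (hx : ∀ t : ℝ, 0 ≤ t → HasDerivAt x (f (x t)) t)
    (hy : ∀ t : ℝ, 0 ≤ t → HasDerivAt y (f (y t)) t) :
    ∀ t : ℝ, 0 ≤ t →
      mnorm M (x t - y t) ≤ Real.exp (-β * t) * mnorm M (x 0 - y 0) := fun _ ht =>
  stmt0_general convex_univ (fun z _ => hf.differentiable one_ne_zero z) hMpd.posSemidef
    (fun z _ => hcontract z) (Set.mapsTo_univ x _) (Set.mapsTo_univ y _)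
    (fun s hs => (hx s hs).hasDerivWithinAt) (fun s hs => (hy s hs).hasDerivWithinAt) ht
end

section
/- Let f : ℝⁿ → ℝⁿ be continuously differentiable, let M be a symmetric positive definite real n×n matrix with M ≼ I, let β > 0, ℓ > 0, ρ_max ≥ 0, and let ω : ℝ → ℝⁿ be a disturbance with ‖ω(t)‖ ≤ ρ_max for all t ≥ 0. Let x, x̄ : [0,∞) → ℝⁿ be differentiable with x′(t) = f(x(t)) + ω(t), x̄′(t) = f(x̄(t)), and x(0) = x̄(0). Assume that for all t ≥ 0 the deviation satisfies ‖x(t) − x̄(t)‖_M ≤ ℓ and that the segment joining x(t) and x̄(t) lies in the contraction region, i.e. (Df(v))ᵀ M + M (Df(v)) ≼ −2βM for every v on that segment. Then for all t ≥ 0, ‖x(t) − x̄(t)‖²_M ≤ (2 ℓ ρ_max / β)(1 − e^{−βt}). -/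
open Matrix

/-!
Let `δ = x - x̄`. By the mean value theorem along the segment from `x̄` to `x`, the contraction
condition gives `⟪δ, f x - f x̄⟫_M ≤ -β ‖δ‖_M²`, so by Cauchy–Schwarz `V = ‖δ‖_M²` satisfies
`V' ≤ 2 (-β V + ρ √V)`. Formally this says `(√V)' ≤ -β √V + ρ`, and a Grönwall argument yields
`‖δ‖_M ≤ (ρ / β) (1 - e^{-βt})`. Multiplying by `‖δ‖_M ≤ ℓ` gives a bound on `‖δ‖_M²` that is
sharper than the required one by a factor `2`.
-/

open Set Filter Topology

section Gronwall

variable {δ K ε ε' t : ℝ}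

theorem gronwallBound_pos (hδ : 0 < δ) (hε : 0 ≤ ε) (ht : 0 ≤ t) : 0 < gronwallBound δ K ε t := by
  rcases lt_trichotomy K 0 with hK | rfl | hK
  · have hexp : Real.exp (K * t) ≤ 1 := Real.exp_le_one_iff.2 (by nlinarith)
    rw [gronwallBound_of_K_ne_0 hK.ne]
    exact add_pos_of_pos_of_nonneg (by positivity)
      (mul_nonneg_of_nonpos_of_nonpos (div_nonpos_of_nonneg_of_nonpos hε hK.le) (by linarith))
  · rw [gronwallBound_K0]
    positivity
  · have hexp : 1 ≤ Real.exp (K * t) := Real.one_le_exp (by positivity)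
    rw [gronwallBound_of_K_ne_0 hK.ne']
    exact add_pos_of_pos_of_nonneg (by positivity) (mul_nonneg (by positivity) (by linarith))

theorem continuous_gronwallBound_add (δ K ε t : ℝ) :
    Continuous fun η => gronwallBound (δ + η) K (ε + η) t := by
  by_cases hK : K = 0
  · simp only [hK, gronwallBound_K0]
    fun_prop
  · simp only [gronwallBound_of_K_ne_0 hK]
    fun_prop

variable {V V' : ℝ → ℝ} {a b : ℝ}

-- The square root is not differentiable at the zeros of `V`, so `V` is compared with the square of
-- a positive barrier `g` that satisfies `g' = K g + ε' > K g + ε`.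
theorem sqrt_le_gronwallBound_of_deriv_right_le_of_lt (hV : ContinuousOn V (Icc a b))
    (hV' : ∀ s ∈ Ico a b, HasDerivWithinAt V (V' s) (Ici s) s) (hε : 0 ≤ ε) (hεε' : ε < ε')
    (hδ : 0 < δ) (ha : √(V a) ≤ δ)
    (bound : ∀ s ∈ Ico a b, V' s ≤ 2 * (K * V s + ε * √(V s))) :
    ∀ s ∈ Icc a b, √(V s) ≤ gronwallBound δ K ε' (s - a) := by
  set g : ℝ → ℝ := fun r => gronwallBound δ K ε' (r - a) with hg
  have g_pos : ∀ r, a ≤ r → 0 < g r := fun r hr =>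
    gronwallBound_pos hδ (hε.trans hεε'.le) (sub_nonneg.2 hr)
  have hg' : ∀ r, HasDerivAt (fun r => g r ^ 2) (2 * g r * (K * g r + ε')) r := fun r => by
    simpa using (hasDerivAt_gronwallBound_shift δ K ε' r a).fun_pow 2
  have initial : V a ≤ g a ^ 2 := by
    simpa only [hg, sub_self, gronwallBound_x0] using (Real.sqrt_le_left hδ.le).1 ha
  have touching : ∀ r ∈ Ico a b, V r = g r ^ 2 → V' r < 2 * g r * (K * g r + ε') := by
    intro r hr hVr
    have hr_pos := g_pos r hr.1
    calc V' r ≤ 2 * (K * g r ^ 2 + ε * g r) := by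
          simpa only [hVr, Real.sqrt_sq hr_pos.le] using bound r hr
      _ = 2 * g r * (K * g r + ε) := by ring
      _ < 2 * g r * (K * g r + ε') := by gcongr
  intro s hs
  refine (Real.sqrt_le_left (g_pos s hs.1).le).2 ?_
  exact image_le_of_deriv_right_lt_deriv_boundary' hV hV' initial
    (fun r _ => (hg' r).continuousAt.continuousWithinAt)
    (fun r _ => (hg' r).hasDerivWithinAt) touching hs

theorem sqrt_le_gronwallBound_of_deriv_right_le (hV : ContinuousOn V (Icc a b))
    (hV' : ∀ s ∈ Ico a b, HasDerivWithinAt V (V' s) (Ici s) s) (hε : 0 ≤ ε) (ha : √(V a) ≤ δ)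
    (bound : ∀ s ∈ Ico a b, V' s ≤ 2 * (K * V s + ε * √(V s))) :
    ∀ s ∈ Icc a b, √(V s) ≤ gronwallBound δ K ε (s - a) := by
  intro s hs
  have limit : Tendsto (fun η => gronwallBound (δ + η) K (ε + η) (s - a)) (𝓝[>] 0)
      (𝓝 (gronwallBound δ K ε (s - a))) := by
    simpa only [add_zero] using
      ((continuous_gronwallBound_add δ K ε (s - a)).tendsto 0).mono_left nhdsWithin_le_nhds
  refine ge_of_tendsto limit ?_
  filter_upwards [self_mem_nhdsWithin] with η (hη : 0 < η)
  have hδ : 0 ≤ δ := (Real.sqrt_nonneg _).trans ha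
  exact sqrt_le_gronwallBound_of_deriv_right_le_of_lt hV hV' hε (lt_add_of_pos_right ε hη)
    (add_pos_of_nonneg_of_pos hδ hη) (ha.trans (le_add_of_nonneg_right hη.le)) bound s hs

theorem gronwallBound_zero_neg (hK : K ≠ 0) :
    gronwallBound 0 (-K) ε t = ε / K * (1 - Real.exp (-K * t)) := by
  rw [gronwallBound_of_K_ne_0 (neg_ne_zero.2 hK)]
  ring

end Gronwall

section BilinearForm

variable {E F : Type*} [NormedAddCommGroup E] [NormedSpace ℝ E] [NormedAddCommGroup F]
  [NormedSpace ℝ F]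

theorem apply_sub_le_of_forall_segment_fderiv_le {f : E → F} {f' : E → E →L[ℝ] F} {a b : E}
    {c : ℝ} (φ : F →L[ℝ] ℝ)
    (hf : ∀ v ∈ segment ℝ a b, HasFDerivWithinAt f (f' v) (segment ℝ a b) v)
    (hc : ∀ v ∈ segment ℝ a b, φ (f' v (a - b)) ≤ c) : φ (f a - f b) ≤ c := by
  obtain ⟨v, hv, hslope⟩ := domain_mvt
    (fun v hv => φ.hasFDerivAt.comp_hasFDerivWithinAt v (hf v hv))
    (convex_segment a b) (right_mem_segment ℝ a b) (left_mem_segment ℝ a b)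
  rw [segment_symm] at hv
  calc φ (f a - f b) = φ (f' v (a - b)) := by simpa using hslope
    _ ≤ c := hc v hv

variable {B : E →L[ℝ] E →L[ℝ] ℝ}

theorem apply_le_sqrt_mul_sqrt (hB : B.toBilinForm.IsPosSemidef) (u v : E) :
    B u v ≤ √(B u u) * √(B v v) := by
  have hB' := LinearMap.BilinForm.isPosSemidef_iff.1 hB
  rw [← Real.sqrt_mul (show 0 ≤ B u u from hB.nonneg u)]
  exact Real.le_sqrt_of_sq_le (B.toBilinForm.apply_sq_le_of_symm hB'.nonneg hB'.isSymm u v)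

theorem sqrt_apply_self_le_gronwallBound (hB : B.toBilinForm.IsPosSemidef) {δ δ' : ℝ → E}
    {K ε : ℝ} (hε : 0 ≤ ε) (hδ : ∀ t, 0 ≤ t → HasDerivWithinAt δ (δ' t) (Ici 0) t)
    (bound : ∀ t, 0 ≤ t → B (δ t) (δ' t) ≤ K * B (δ t) (δ t) + ε * √(B (δ t) (δ t))) :
    ∀ t, 0 ≤ t → √(B (δ t) (δ t)) ≤ gronwallBound √(B (δ 0) (δ 0)) K ε t := by
  intro t ht
  have hV : ∀ s, 0 ≤ s →
      HasDerivWithinAt (fun s => B (δ s) (δ s)) (2 * B (δ s) (δ' s)) (Ici 0) s := fun s hs => by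
    have hsymm : B (δ' s) (δ s) = B (δ s) (δ' s) := hB.eq _ _
    simpa only [hsymm, ← two_mul] using B.hasDerivWithinAt_of_bilinear (hδ s hs) (hδ s hs)
  have gronwall := sqrt_le_gronwallBound_of_deriv_right_le (a := 0) (b := t)
    (fun s hs => ((hV s hs.1).continuousWithinAt).mono Icc_subset_Ici_self)
    (fun s hs => (hV s hs.1).mono (Ici_subset_Ici.2 hs.1)) hε le_rfl
    (fun s hs => mul_le_mul_of_nonneg_left (bound s hs.1) zero_le_two) t ⟨ht, le_rfl⟩
  rwa [sub_zero] at gronwall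

theorem stmt8_general (hB : B.toBilinForm.IsPosSemidef) {f : E → E} {f' : E → E →L[ℝ] E}
    {β ρ : ℝ} {ω x y : ℝ → E} (hω : ∀ t, 0 ≤ t → √(B (ω t) (ω t)) ≤ ρ)
    (hx : ∀ t, 0 ≤ t → HasDerivWithinAt x (f (x t) + ω t) (Ici 0) t)
    (hy : ∀ t, 0 ≤ t → HasDerivWithinAt y (f (y t)) (Ici 0) t)
    (hf : ∀ t, 0 ≤ t → ∀ v ∈ segment ℝ (x t) (y t),
      HasFDerivWithinAt f (f' v) (segment ℝ (x t) (y t)) v)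
    (hcontract : ∀ t, 0 ≤ t → ∀ v ∈ segment ℝ (x t) (y t), ∀ d, B d (f' v d) ≤ -β * B d d) :
    ∀ t, 0 ≤ t → √(B (x t - y t) (x t - y t)) ≤
      gronwallBound √(B (x 0 - y 0) (x 0 - y 0)) (-β) ρ t := by
  have hρ : 0 ≤ ρ := (Real.sqrt_nonneg _).trans (hω 0 le_rfl)
  refine sqrt_apply_self_le_gronwallBound hB hρ (fun t ht => (hx t ht).sub (hy t ht)) ?_
  intro t ht
  set d := x t - y t
  have drift : B d (f (x t) - f (y t)) ≤ -β * B d d :=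
    apply_sub_le_of_forall_segment_fderiv_le (B d) (hf t ht) fun v hv => hcontract t ht v hv d
  have disturbance : B d (ω t) ≤ ρ * √(B d d) :=
    calc B d (ω t) ≤ √(B d d) * √(B (ω t) (ω t)) := apply_le_sqrt_mul_sqrt hB d (ω t)
      _ ≤ √(B d d) * ρ := by gcongr; exact hω t ht
      _ = ρ * √(B d d) := mul_comm _ _
  calc B d (f (x t) + ω t - f (y t)) = B d (f (x t) - f (y t)) + B d (ω t) := by
        rw [← map_add]; congr 1; abel
    _ ≤ -β * B d d + ρ * √(B d d) := add_le_add drift disturbance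

end BilinearForm

section MatrixForm

variable {ι : Type*} [Fintype ι] [DecidableEq ι] {M : Matrix ι ι ℝ}

/-- The bilinear form `(v, w) ↦ vᵀ M w` of a real matrix as a continuous bilinear map, for use as
the constant metric in `stmt8_general`. -/
noncomputable def matrixForm (M : Matrix ι ι ℝ) : (ι → ℝ) →L[ℝ] (ι → ℝ) →L[ℝ] ℝ :=
  (Matrix.toBilin' M).toContinuousBilinearMap

theorem matrixForm_apply (M : Matrix ι ι ℝ) (v w : ι → ℝ) :
    matrixForm M v w = v ⬝ᵥ M *ᵥ w :=
  Matrix.toBilin'_apply' M v w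

theorem matrixForm_comm (hM : M.IsSymm) (v w : ι → ℝ) :
    matrixForm M v w = matrixForm M w v := by
  rw [matrixForm_apply, matrixForm_apply, ← dotProduct_transpose_mulVec, hM.eq]

theorem isPosSemidef_matrixForm (hM : M.PosSemidef) :
    (matrixForm M).toBilinForm.IsPosSemidef where
  eq := matrixForm_comm (Matrix.isHermitian_iff_isSymm.1 hM.isHermitian)
  nonneg v := by simpa [matrixForm_apply] using hM.dotProduct_mulVec_nonneg v

end MatrixForm

section LoewnerOrder

variable {n : ℕ} {M : Matrix (Fin n) (Fin n) ℝ}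

theorem mnorm_eq_sqrt_matrixForm (M : Matrix (Fin n) (Fin n) ℝ) (v : Fin n → ℝ) :
    mnorm M v = √(matrixForm M v v) := by
  rw [mnorm, matrixForm_apply]

theorem mnorm_zero (M : Matrix (Fin n) (Fin n) ℝ) : mnorm M 0 = 0 := by
  simp [mnorm]

theorem matrixForm_self_le_of_loewnerLE {A B : Matrix (Fin n) (Fin n) ℝ} (h : loewnerLE A B)
    (v : Fin n → ℝ) : matrixForm A v v ≤ matrixForm B v v := by
  have := h.dotProduct_mulVec_nonneg v
  simp only [star_trivial, Matrix.sub_mulVec, dotProduct_sub] at this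
  simpa only [matrixForm_apply] using sub_nonneg.1 this

theorem mnorm_le_sqrt_dotProduct (hM : loewnerLE M 1) (v : Fin n → ℝ) : mnorm M v ≤ √(v ⬝ᵥ v) := by
  rw [mnorm_eq_sqrt_matrixForm]
  gcongr
  simpa only [matrixForm_apply, Matrix.one_mulVec] using matrixForm_self_le_of_loewnerLE hM v

theorem matrixForm_fderiv_le_of_loewnerLE {f : (Fin n → ℝ) → (Fin n → ℝ)} {v : Fin n → ℝ}
    {β : ℝ} (hM : M.IsSymm)
    (h : loewnerLE ((jac f v)ᵀ * M + M * jac f v) ((-(2 * β)) • M)) (d : Fin n → ℝ) :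
    matrixForm M d (fderiv ℝ f v d) ≤ -β * matrixForm M d d := by
  have hjac : jac f v *ᵥ d = fderiv ℝ f v d := LinearMap.toMatrix'_mulVec _ _
  have symmetrized : matrixForm ((jac f v)ᵀ * M + M * jac f v) d d =
      2 * matrixForm M d (fderiv ℝ f v d) := by
    rw [two_mul]
    nth_rw 2 [matrixForm_comm hM]
    simp only [matrixForm_apply, Matrix.add_mulVec, dotProduct_add, ← Matrix.mulVec_mulVec, hjac,
      Matrix.dotProduct_mulVec d (jac f v)ᵀ, Matrix.vecMul_transpose]
    ring
  have scaled : matrixForm ((-(2 * β)) • M) d d = -(2 * β) * matrixForm M d d := by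
    simp only [matrixForm_apply, Matrix.smul_mulVec, dotProduct_smul, smul_eq_mul]
  have := matrixForm_self_le_of_loewnerLE h d
  rw [symmetrized, scaled] at this
  linarith

end LoewnerOrder

theorem stmt8 {n : ℕ} (f : (Fin n → ℝ) → (Fin n → ℝ)) (hf : ContDiff ℝ 1 f)
    (M : Matrix (Fin n) (Fin n) ℝ) (hMsymm : M.IsSymm) (hMpd : M.PosDef)
    (hMle : loewnerLE M (1 : Matrix (Fin n) (Fin n) ℝ))
    (β ℓ ρmax : ℝ) (hβ : 0 < β) (hℓ : 0 < ℓ) (hρ : 0 ≤ ρmax)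
    (ω : ℝ → Fin n → ℝ)
    (hω : ∀ t : ℝ, 0 ≤ t → Real.sqrt (ω t ⬝ᵥ ω t) ≤ ρmax)
    (x xbar : ℝ → Fin n → ℝ)
    (hx : ∀ t : ℝ, 0 ≤ t → HasDerivAt x (f (x t) + ω t) t)
    (hxbar : ∀ t : ℝ, 0 ≤ t → HasDerivAt xbar (f (xbar t)) t)
    (hinit : x 0 = xbar 0)
    (htube : ∀ t : ℝ, 0 ≤ t → mnorm M (x t - xbar t) ≤ ℓ)
    (hcontract : ∀ t : ℝ, 0 ≤ t → ∀ v ∈ segment ℝ (x t) (xbar t),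
      loewnerLE ((jac f v)ᵀ * M + M * jac f v) ((-(2 * β)) • M)) :
    ∀ t : ℝ, 0 ≤ t →
      (mnorm M (x t - xbar t)) ^ 2 ≤ (2 * ℓ * ρmax / β) * (1 - Real.exp (-β * t)) := by
  intro t ht
  set m := mnorm M (x t - xbar t)
  have deviation : m ≤ ρmax / β * (1 - Real.exp (-β * t)) := by
    have bound := stmt8_general (isPosSemidef_matrixForm hMpd.posSemidef)
      (fun s hs => (mnorm_eq_sqrt_matrixForm M (ω s)).ge.trans
        ((mnorm_le_sqrt_dotProduct hMle (ω s)).trans (hω s hs)))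
      (fun s hs => (hx s hs).hasDerivWithinAt) (fun s hs => (hxbar s hs).hasDerivWithinAt)
      (fun _ _ v _ => (hf.differentiable one_ne_zero v).hasFDerivAt.hasFDerivWithinAt)
      (fun s hs v hv => matrixForm_fderiv_le_of_loewnerLE hMsymm (hcontract s hs v hv)) t ht
    rwa [← mnorm_eq_sqrt_matrixForm, ← mnorm_eq_sqrt_matrixForm, hinit, sub_self, mnorm_zero,
      gronwallBound_zero_neg hβ.ne'] at bound
  have hm0 : 0 ≤ m := Real.sqrt_nonneg _
  calc m ^ 2 ≤ ℓ * (ρmax / β * (1 - Real.exp (-β * t))) := by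
        rw [sq]
        exact mul_le_mul (htube t ht) deviation hm0 hℓ.le
    _ ≤ 2 * (ℓ * (ρmax / β * (1 - Real.exp (-β * t)))) :=
        le_mul_of_one_le_left (mul_nonneg hℓ.le (hm0.trans deviation)) one_le_two
    _ = (2 * ℓ * ρmax / β) * (1 - Real.exp (-β * t)) := by ring
end
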